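/- arXiv:2202.05225 — 2 statements merged into one kernel-verified Lean document; each statement's English description precedes it below -/
import Mathlib

section
/- Let m ≥ 2, let a_i, b_i, c_i ∈ ℝ (i = 1, …, m) satisfy Σ_i a_i = Σ_i b_i = Σ_i c_i = 0, and let p, r ∈ ℝ. Then the following are equivalent: (i) for every permutation σ of {1,…,m}, p·D_σ = r·E_σ; (ii) either b_i = 0 for all i = 1, …, m, or there exists q ∈ ℝ such that p·a_i + q·b_i + r·c_i = 0 for all i = 1, …, m. -/
open Finset

/-- `D_σ` for real data `a, b`. -/
noncomputable def Dperm {m : ℕ} (a b : Fin m → ℝ) (σ : Equiv.Perm (Fin m)) : ℝ :=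
  (∑ i, ∑ j ∈ Ioi i, a (σ i) * b (σ j)) + (1 / 2) * ∑ i, a i * b i

theorem Dperm_eq {m : ℕ} (a b : Fin m → ℝ) (σ : Equiv.Perm (Fin m)) :
    Dperm a b σ = (∑ i, ∑ j, if i < j then a (σ i) * b (σ j) else 0)
      + (1 / 2) * ∑ i, a i * b i := by
  unfold Dperm
  congr 1
  refine Finset.sum_congr rfl fun i _ => ?_
  rw [← Finset.sum_filter]
  congr 1
  ext j
  simp

theorem Dperm_anti {m : ℕ} (a b : Fin m → ℝ) (ha : ∑ i, a i = 0) (σ : Equiv.Perm (Fin m)) :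
    Dperm a b σ = - Dperm b a σ := by
  have h1 : ∑ i, ∑ j, a (σ i) * b (σ j) = 0 := by
    rw [← Finset.sum_mul_sum, Equiv.sum_comp σ a, ha, zero_mul]
  have h2 : ∑ i, ∑ j, a (σ i) * b (σ j)
      = (∑ i, ∑ j, if i < j then a (σ i) * b (σ j) else 0)
        + (∑ i, ∑ j, if i < j then b (σ i) * a (σ j) else 0) + ∑ i, a i * b i := by
    rw [Finset.sum_comm (f := fun i j => if i < j then b (σ i) * a (σ j) else 0),
      ← Equiv.sum_comp σ (fun i => a i * b i), ← Finset.sum_add_distrib, ← Finset.sum_add_distrib]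
    refine Finset.sum_congr rfl fun i _ => ?_
    have : a (σ i) * b (σ i) = ∑ j, if i = j then a (σ i) * b (σ j) else 0 := by simp
    rw [this, ← Finset.sum_add_distrib, ← Finset.sum_add_distrib]
    refine Finset.sum_congr rfl fun j _ => ?_
    rcases lt_trichotomy i j with h | h | h
    · simp [h, h.not_gt, h.ne]
    · simp [h]
    · simp [h, h.not_gt, h.ne', mul_comm]
  have h3 : ∑ i, b i * a i = ∑ i, a i * b i :=
    Finset.sum_congr rfl fun i _ => mul_comm _ _
  rw [Dperm_eq, Dperm_eq, h3]
  linarith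

theorem Dperm_lin {m : ℕ} (a b c : Fin m → ℝ) (p r : ℝ) (σ : Equiv.Perm (Fin m)) :
    Dperm (fun i => p * a i + r * c i) b σ = p * Dperm a b σ + r * Dperm c b σ := by
  unfold Dperm
  simp only [add_mul, Finset.sum_add_distrib, mul_assoc, ← Finset.mul_sum]
  ring

theorem Dperm_swap {n : ℕ} (x b : Fin (n + 2) → ℝ) (σ : Equiv.Perm (Fin (n + 2))) :
    Dperm x b σ - Dperm x b (σ * Equiv.swap 0 1)
      = x (σ 0) * b (σ 1) - x (σ 1) * b (σ 0) := by
  have hk : ∀ k : Fin n, Equiv.swap (0 : Fin (n + 2)) 1 k.succ.succ = k.succ.succ := by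
    intro k
    apply Equiv.swap_apply_of_ne_of_ne
    · exact Fin.succ_ne_zero _
    · intro h
      exact Fin.succ_ne_zero k (Fin.succ_injective _ h)
  have key : ∀ f : Fin (n + 2) → Fin (n + 2) → ℝ,
      (∑ i, ∑ j, if i < j then f i j else 0) = f 0 1 + ∑ k : Fin n, f 0 k.succ.succ
        + ∑ k : Fin n, f 1 k.succ.succ
        + ∑ k : Fin n, ∑ l : Fin n, if k < l then f k.succ.succ l.succ.succ else 0 := by
    intro f
    simp [Fin.sum_univ_succ]
    try ring
  rw [Dperm_eq, Dperm_eq, key (fun i j => x (σ i) * b (σ j)),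
    key (fun i j => x ((σ * Equiv.swap 0 1 : Equiv.Perm (Fin (n + 2))) i) *
      b ((σ * Equiv.swap 0 1 : Equiv.Perm (Fin (n + 2))) j))]
  simp only [Equiv.Perm.mul_apply, hk, Equiv.swap_apply_left, Equiv.swap_apply_right]
  ring

theorem exists_perm_pair {n : ℕ} (u v : Fin (n + 2)) (h : u ≠ v) :
    ∃ σ : Equiv.Perm (Fin (n + 2)), σ 0 = u ∧ σ 1 = v := by
  refine ⟨Equiv.swap 0 u * Equiv.swap 1 ((Equiv.swap 0 u).symm v), ?_, ?_⟩
  · rw [Equiv.Perm.mul_apply, Equiv.swap_apply_of_ne_of_ne (a := 1), Equiv.swap_apply_left]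
    · simp
    · intro h0
      rw [Equiv.eq_symm_apply, Equiv.swap_apply_left] at h0
      exact h h0
  · rw [Equiv.Perm.mul_apply, Equiv.swap_apply_left, Equiv.apply_symm_apply]

theorem stmt3 (m : ℕ) (hm : 2 ≤ m) (a b c : Fin m → ℝ)
    (ha : ∑ i, a i = 0) (hb : ∑ i, b i = 0) (hc : ∑ i, c i = 0)
    (p r : ℝ) :
    (∀ σ : Equiv.Perm (Fin m), p * Dperm a b σ = r * Dperm b c σ) ↔
      ((∀ i, b i = 0) ∨ ∃ q : ℝ, ∀ i, p * a i + q * b i + r * c i = 0) := by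
  obtain ⟨n, rfl⟩ : ∃ n, m = n + 2 := ⟨m - 2, by omega⟩
  have hx : ∀ σ, (p * Dperm a b σ = r * Dperm b c σ) ↔
      Dperm (fun i => p * a i + r * c i) b σ = 0 := by
    intro σ
    rw [Dperm_lin, Dperm_anti b c hb]
    constructor <;> intro h <;> linarith
  simp only [hx]
  constructor
  · intro h
    by_cases hb0 : ∀ i, b i = 0
    · exact Or.inl hb0
    · right
      push Not at hb0
      obtain ⟨v, hv⟩ := hb0
      refine ⟨-((p * a v + r * c v) / b v), fun u => ?_⟩
      by_cases huv : u = v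
      · subst huv
        field_simp
        ring
      · obtain ⟨σ, h0, h1⟩ := exists_perm_pair u v huv
        have hs := Dperm_swap (fun i => p * a i + r * c i) b σ
        rw [h, h, h0, h1] at hs
        field_simp
        linarith
  · rintro (h | ⟨q, hq⟩) σ
    · simp [Dperm, h]
    · have hbb := Dperm_anti b b hb σ
      have e : (fun i => p * a i + r * c i) = fun i => (-q) * b i + 0 * b i := by
        funext i
        linarith [hq i]
      rw [e, Dperm_lin]
      have : Dperm b b σ = 0 := by linarith
      simp [this]
end

section
/- Let B_1, B_2, B_3, B_4 ∈ UT(4,ℤ) satisfy Σ_{i=1}^4 φ0(B_i) = 0 and suppose the ℝ≥0-cone generated by φ0(B_1), φ0(B_2), φ0(B_3), φ0(B_4) equals ℝ³. Then the ℝ≥0-cone generated by the set {τ(B(σ,t)) : σ a permutation of {1,2,3,4}, t ∈ ℤ≥0}, viewed in ℝ³, equals all of ℝ³. -/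
open Finset

/-- The 4×4 upper unitriangular integer matrix `UT(a,b,c;d,e,f)`. -/
def UT (a b c d e f : ℤ) : Matrix (Fin 4) (Fin 4) ℤ :=
  !![1, a, d, f; 0, 1, b, e; 0, 0, 1, c; 0, 0, 0, 1]

/-- The set `UT(4,ℤ)` of 4×4 upper unitriangular integer matrices. -/
def UT4 : Set (Matrix (Fin 4) (Fin 4) ℤ) :=
  {M | ∃ a b c d e f, M = UT a b c d e f}

/-- `φ0 : UT(4,ℤ) → ℤ³`, `UT(a,b,c;d,e,f) ↦ (a,b,c)`. -/
def phi0 (M : Matrix (Fin 4) (Fin 4) ℤ) : Fin 3 → ℤ :=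
  ![M 0 1, M 1 2, M 2 3]

/-- `φ0` followed by the embedding `ℤ³ → ℝ³`. -/
def phi0R (M : Matrix (Fin 4) (Fin 4) ℤ) : Fin 3 → ℝ :=
  fun i => (phi0 M i : ℝ)

/-- `τ : U_1 → ℤ³`, `U_1(d,e,f) ↦ (d,e,f)`, followed by the embedding `ℤ³ → ℝ³`. -/
def tauR (M : Matrix (Fin 4) (Fin 4) ℤ) : Fin 3 → ℝ :=
  ![(M 0 2 : ℝ), (M 1 3 : ℝ), (M 0 3 : ℝ)]

/-- `B(σ,t) = B_{σ(1)}^t ⋯ B_{σ(m)}^t` (ordered product). -/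
def Bprod {m : ℕ} (B : Fin m → Matrix (Fin 4) (Fin 4) ℤ) (σ : Equiv.Perm (Fin m))
    (t : ℕ) : Matrix (Fin 4) (Fin 4) ℤ :=
  ((List.finRange m).map (fun i => (B (σ i)) ^ t)).prod

/-- The `ℝ≥0`-cone generated by a finite family of vectors in `ℝⁿ`. -/
def coneFin {k n : ℕ} (v : Fin k → (Fin n → ℝ)) : Set (Fin n → ℝ) :=
  {x | ∃ r : Fin k → ℝ, (∀ i, 0 ≤ r i) ∧ x = ∑ i, r i • v i}

/-- The `ℝ≥0`-cone generated by a set `S ⊆ ℝⁿ`: all finite nonnegative real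
linear combinations of elements of `S`. -/
def coneOfSet {n : ℕ} (S : Set (Fin n → ℝ)) : Set (Fin n → ℝ) :=
  {x | ∃ (l : ℕ) (r : Fin l → ℝ) (v : Fin l → (Fin n → ℝ)),
    (∀ i, 0 ≤ r i) ∧ (∀ i, v i ∈ S) ∧ x = ∑ i, r i • v i}

lemma UT_mul (a b c d e f a' b' c' d' e' f' : ℤ) :
    UT a b c d e f * UT a' b' c' d' e' f' =
      UT (a + a') (b + b') (c + c') (d + a * b' + d') (e + b * c' + e')
        (f + d * c' + a * e' + f') := by
  ext i j
  fin_cases i <;> fin_cases j <;>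
    simp [UT, Matrix.mul_apply, Fin.sum_univ_four] <;> ring

lemma UT_pow (a b c d e f : ℤ) (t : ℕ) : ∃ d' e' f' : ℤ,
    (UT a b c d e f) ^ t = UT (t * a) (t * b) (t * c) d' e' f' ∧
    (d' : ℝ) = t * (d - a * b / 2) + t ^ 2 * (a * b / 2) ∧
    (e' : ℝ) = t * (e - b * c / 2) + t ^ 2 * (b * c / 2) ∧
    (f' : ℝ) = t * (f - (a * e + d * c) / 2 + a * b * c / 3)
      + t ^ 2 * ((a * e + d * c) / 2 - a * b * c / 2) + t ^ 3 * (a * b * c / 6) := by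
  induction t with
  | zero =>
    refine ⟨0, 0, 0, ?_, ?_, ?_, ?_⟩
    · ext i j
      fin_cases i <;> fin_cases j <;> simp [UT]
    all_goals simp
  | succ t ih =>
    obtain ⟨d', e', f', h, hd, he, hf⟩ := ih
    refine ⟨d' + (t * a) * b + d, e' + (t * b) * c + e, f' + d' * c + (t * a) * e + f,
      ?_, ?_, ?_, ?_⟩
    rotate_left
    · push_cast; rw [hd]; ring
    · push_cast; rw [he]; ring
    · push_cast; rw [hf, hd]; ring
    · rw [pow_succ, h, UT_mul]
      congr 1 <;> push_cast <;> ring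

lemma lead2 (x y : ℝ) (h : ∀ n : ℕ, 0 ≤ x * n + y * n ^ 2) : 0 ≤ y := by
  by_contra hy
  push Not at hy
  obtain ⟨n, hn⟩ := exists_nat_gt ((|x| + 1) / (-y))
  rw [div_lt_iff₀ (by linarith)] at hn
  have h1 := h n
  have hx := le_abs_self x
  have hx0 := abs_nonneg x
  have hn0 : (0 : ℝ) < n := by
    by_contra h0
    have : (n : ℝ) = 0 := le_antisymm (not_lt.mp h0) (Nat.cast_nonneg n)
    rw [this] at hn; linarith
  nlinarith

lemma lead3 (x y z : ℝ) (h : ∀ n : ℕ, 0 ≤ x * n + y * n ^ 2 + z * n ^ 3) : 0 ≤ z := by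
  apply lead2 (|x| + |y|) z
  intro n
  rcases Nat.eq_zero_or_pos n with rfl | hn
  · simp
  have hn1 : (1 : ℝ) ≤ n := by exact_mod_cast hn
  have h1 := h n
  have hx := le_abs_self x
  have hx0 := abs_nonneg x
  have hy := le_abs_self y
  have : 0 ≤ n * ((|x| + |y|) * n + z * (n : ℝ) ^ 2) := by
    have : x * n ≤ |x| * n ^ 2 := by
      have e1 : x * n ≤ |x| * n := mul_le_mul_of_nonneg_right hx (by linarith)
      have e2 : |x| * n ≤ |x| * n ^ 2 := mul_le_mul_of_nonneg_left (by nlinarith) hx0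
      linarith
    nlinarith [sq_nonneg (n : ℝ)]
  exact nonneg_of_mul_nonneg_right this (by linarith)

/-- Duality for cones of sets. -/
lemma cone_univ (S : Set (Fin 3 → ℝ))
    (H : ∀ α β γ : ℝ, (∀ v ∈ S, 0 ≤ α * v 0 + β * v 1 + γ * v 2) →
      α = 0 ∧ β = 0 ∧ γ = 0) : coneOfSet S = Set.univ := by
  set C : Submodule {r : ℝ // 0 ≤ r} (Fin 3 → ℝ) := Submodule.span {r : ℝ // 0 ≤ r} S with hC
  have hsub : (C : Set (Fin 3 → ℝ)) ⊆ coneOfSet S := by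
    intro x hx
    obtain ⟨n, r, g, h⟩ := Submodule.mem_span_set'.1 hx
    exact ⟨n, fun i => (r i : ℝ), fun i => g i, fun i => (r i).2, fun i => (g i).2, h.symm⟩
  have hsm : ∀ (r : ℝ), 0 ≤ r → ∀ x ∈ C, r • x ∈ C := fun r hr x hx =>
    C.smul_mem (⟨r, hr⟩ : {r : ℝ // 0 ≤ r}) hx
  have hconv : Convex ℝ (C : Set (Fin 3 → ℝ)) := by
    intro x hx y hy a b ha hb _
    exact C.add_mem (hsm a ha x hx) (hsm b hb y hy)
  have hdense : closure (C : Set (Fin 3 → ℝ)) = Set.univ := by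
    by_contra hne
    obtain ⟨x, hx⟩ := (Set.ne_univ_iff_exists_notMem _).1 hne
    obtain ⟨f, u, hf, hu⟩ := geometric_hahn_banach_closed_point hconv.closure isClosed_closure hx
    have h0 : 0 < u := by
      have := hf 0 (subset_closure C.zero_mem)
      simpa using this
    have hneg : ∀ v ∈ C, f v ≤ 0 := by
      intro v hv
      by_contra hp
      push Not at hp
      have := hf ((u / f v) • v) (subset_closure (hsm _ (by positivity) v hv))
      rw [map_smul, smul_eq_mul, div_mul_cancel₀ _ hp.ne'] at this
      exact lt_irrefl _ this
    have hexp : ∀ v : Fin 3 → ℝ, f v = v 0 * f (Pi.single 0 1) + v 1 * f (Pi.single 1 1)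
        + v 2 * f (Pi.single 2 1) := by
      intro v
      have : v = v 0 • Pi.single 0 1 + v 1 • Pi.single 1 1 + v 2 • Pi.single 2 1 := by
        ext i; fin_cases i <;> simp
      conv_lhs => rw [this]
      simp only [map_add, map_smul, smul_eq_mul]
    obtain ⟨h1, h2, h3⟩ := H (-f (Pi.single 0 1)) (-f (Pi.single 1 1)) (-f (Pi.single 2 1)) (by
      intro v hv
      have := hneg v (Submodule.subset_span hv)
      rw [hexp] at this
      linarith)
    have hx0 := hexp x
    rw [neg_eq_zero] at h1 h2 h3
    rw [h1, h2, h3] at hx0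
    linarith
  have haff : affineSpan ℝ (C : Set (Fin 3 → ℝ)) = ⊤ := by
    have hcl : IsClosed (affineSpan ℝ (C : Set (Fin 3 → ℝ)) : Set (Fin 3 → ℝ)) :=
      AffineSubspace.closed_of_finiteDimensional _
    have := closure_minimal (subset_affineSpan ℝ (C : Set (Fin 3 → ℝ))) hcl
    rw [hdense] at this
    exact SetLike.coe_injective (Set.univ_subset_iff.1 this)
  have hint := hconv.interior_nonempty_iff_affineSpan_eq_top.2 haff
  have h := hconv.interior_closure_eq_interior_of_nonempty_interior hint
  rw [hdense, interior_univ] at h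
  apply Set.univ_subset_iff.1
  rw [h]
  exact interior_subset.trans hsub

/-- quadratic part -/
noncomputable def Q2 (a b : Fin 4 → ℝ) (i j k l : Fin 4) : ℝ :=
  (a i * b i + a j * b j + a k * b k + a l * b l) / 2 +
  (a i * b j + a i * b k + a i * b l + a j * b k + a j * b l + a k * b l)

/-- cubic part -/
noncomputable def Q3 (a b c : Fin 4 → ℝ) (i j k l : Fin 4) : ℝ :=
  (a i * b i * c i + a j * b j * c j + a k * b k * c k + a l * b l * c l) / 6 +
  (a i * b i * (c j + c k + c l) + a j * b j * (c k + c l) + a k * b k * c l) / 2 +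
  (a i * (b j * c j + b k * c k + b l * c l) + a j * (b k * c k + b l * c l)
    + a k * b l * c l) / 2 +
  (a i * b j * c k + a i * b j * c l + a i * b k * c l + a j * b k * c l)

lemma entries (B : Fin 4 → Matrix (Fin 4) (Fin 4) ℤ) (a b c d e f : Fin 4 → ℤ)
    (h : ∀ i, B i = UT (a i) (b i) (c i) (d i) (e i) (f i)) (σ : Equiv.Perm (Fin 4)) :
    ∃ x y z w : ℝ, ∀ t : ℕ,
      tauR (Bprod B σ t) 0 = x * t +
        Q2 (fun i => (a i : ℝ)) (fun i => (b i : ℝ)) (σ 0) (σ 1) (σ 2) (σ 3) * t ^ 2 ∧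
      tauR (Bprod B σ t) 1 = y * t +
        Q2 (fun i => (b i : ℝ)) (fun i => (c i : ℝ)) (σ 0) (σ 1) (σ 2) (σ 3) * t ^ 2 ∧
      tauR (Bprod B σ t) 2 = z * t + w * t ^ 2 +
        Q3 (fun i => (a i : ℝ)) (fun i => (b i : ℝ)) (fun i => (c i : ℝ))
          (σ 0) (σ 1) (σ 2) (σ 3) * t ^ 3 := by
  set D : Fin 4 → ℝ := fun i => d (σ i) - a (σ i) * b (σ i) / 2 with hD
  set E : Fin 4 → ℝ := fun i => e (σ i) - b (σ i) * c (σ i) / 2 with hE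
  set F : Fin 4 → ℝ := fun i => f (σ i) - (a (σ i) * e (σ i) + d (σ i) * c (σ i)) / 2
    + a (σ i) * b (σ i) * c (σ i) / 3 with hF
  set G : Fin 4 → ℝ := fun i => (a (σ i) * e (σ i) + d (σ i) * c (σ i)) / 2
    - a (σ i) * b (σ i) * c (σ i) / 2 with hG
  refine ⟨D 0 + D 1 + D 2 + D 3, E 0 + E 1 + E 2 + E 3, F 0 + F 1 + F 2 + F 3,
    G 0 + G 1 + G 2 + G 3 +
    (D 0 * (c (σ 1) + c (σ 2) + c (σ 3)) + D 1 * (c (σ 2) + c (σ 3)) + D 2 * c (σ 3)) +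
    (a (σ 0) * (E 1 + E 2 + E 3) + a (σ 1) * (E 2 + E 3) + a (σ 2) * E 3), fun t => ?_⟩
  have hp := fun i => UT_pow (a (σ i)) (b (σ i)) (c (σ i)) (d (σ i)) (e (σ i)) (f (σ i)) t
  choose d' e' f' hp hd he hf using hp
  have hBp : Bprod B σ t = B (σ 0) ^ t * (B (σ 1) ^ t * (B (σ 2) ^ t * B (σ 3) ^ t)) := by
    simp [Bprod, List.finRange_succ]
  rw [hBp, h, h, h, h, hp, hp, hp, hp, UT_mul, UT_mul, UT_mul]
  refine ⟨?_, ?_, ?_⟩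
  · simp [tauR, UT, Q2, hd, hD]; ring
  · simp [tauR, UT, Q2, he, hE]; ring
  · simp [tauR, UT, Q3, hd, he, hf, hD, hE, hF, hG]; ring

lemma Q3_sum (a b c : Fin 4 → ℝ) (ha : a 0 + a 1 + a 2 + a 3 = 0)
    (hb : b 0 + b 1 + b 2 + b 3 = 0) (hc : c 0 + c 1 + c 2 + c 3 = 0) :
    Q3 a b c 0 1 2 3 + Q3 a b c 0 1 3 2 + Q3 a b c 0 2 1 3 + Q3 a b c 0 2 3 1 +
    Q3 a b c 0 3 1 2 + Q3 a b c 0 3 2 1 +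
    Q3 a b c 1 0 2 3 + Q3 a b c 1 0 3 2 + Q3 a b c 1 2 0 3 + Q3 a b c 1 2 3 0 +
    Q3 a b c 1 3 0 2 + Q3 a b c 1 3 2 0 +
    Q3 a b c 2 0 1 3 + Q3 a b c 2 0 3 1 + Q3 a b c 2 1 0 3 + Q3 a b c 2 1 3 0 +
    Q3 a b c 2 3 0 1 + Q3 a b c 2 3 1 0 +
    Q3 a b c 3 0 1 2 + Q3 a b c 3 0 2 1 + Q3 a b c 3 1 0 2 + Q3 a b c 3 1 2 0 +
    Q3 a b c 3 2 0 1 + Q3 a b c 3 2 1 0 = 0 := by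
  have ha : a 3 = -(a 0 + a 1 + a 2) := by linarith
  have hb : b 3 = -(b 0 + b 1 + b 2) := by linarith
  have hc : c 3 = -(c 0 + c 1 + c 2) := by linarith
  simp only [Q3, ha, hb, hc]
  ring

lemma perm_of (i j k l : Fin 4) (h : Function.Injective ![i, j, k, l]) :
    ∃ σ : Equiv.Perm (Fin 4), σ 0 = i ∧ σ 1 = j ∧ σ 2 = k ∧ σ 3 = l :=
  ⟨Equiv.ofBijective _ (Finite.injective_iff_bijective.1 h), rfl, rfl, rfl, rfl⟩

/-- triple bracket -/
noncomputable def TB (a b c : Fin 4 → ℝ) (i j k : Fin 4) : ℝ :=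
  a k * (b i * c j - b j * c i) - c k * (a i * b j - a j * b i)

theorem stmt8 (B : Fin 4 → Matrix (Fin 4) (Fin 4) ℤ)
    (hB : ∀ i, B i ∈ UT4)
    (hsum : ∑ i, phi0 (B i) = 0)
    (hcone : coneFin (fun i => phi0R (B i)) = Set.univ) :
    coneOfSet {v | ∃ (σ : Equiv.Perm (Fin 4)) (t : ℕ), v = tauR (Bprod B σ t)} =
      Set.univ := by
  choose a' b' c' d e f h using hB
  set a : Fin 4 → ℝ := fun i => (a' i : ℝ) with ha
  set b : Fin 4 → ℝ := fun i => (b' i : ℝ) with hb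
  set c : Fin 4 → ℝ := fun i => (c' i : ℝ) with hc
  have hphi : ∀ i, phi0R (B i) = ![a i, b i, c i] := by
    intro i
    ext j
    rw [h]
    fin_cases j <;> simp [phi0R, phi0, UT, ha, hb, hc]
  have hsa : a 0 + a 1 + a 2 + a 3 = 0 := by
    have := congrFun hsum 0
    simp [Fin.sum_univ_four, h, phi0, UT] at this
    simp only [ha]; exact_mod_cast this
  have hsb : b 0 + b 1 + b 2 + b 3 = 0 := by
    have := congrFun hsum 1
    simp [Fin.sum_univ_four, h, phi0, UT] at this
    simp only [hb]; exact_mod_cast this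
  have hsc : c 0 + c 1 + c 2 + c 3 = 0 := by
    have := congrFun hsum 2
    simp [Fin.sum_univ_four, h, phi0, UT] at this
    simp only [hc]; exact_mod_cast this
  have nondeg : ∀ p q r : ℝ, (∀ i, p * a i + q * b i + r * c i = 0) →
      p = 0 ∧ q = 0 ∧ r = 0 := by
    intro p q r hz
    have : (![p, q, r] : Fin 3 → ℝ) ∈ coneFin (fun i => phi0R (B i)) := by
      rw [hcone]; trivial
    obtain ⟨s, _, hs⟩ := this
    have h0 := congrFun hs 0
    have h1 := congrFun hs 1
    have h2 := congrFun hs 2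
    simp [Fin.sum_univ_four, hphi] at h0 h1 h2
    have key : p * p + q * q + r * r = 0 := by
      linear_combination p * h0 + q * h1 + r * h2 + s 0 * hz 0 + s 1 * hz 1 + s 2 * hz 2
        + s 3 * hz 3
    refine ⟨?_, ?_, ?_⟩ <;> nlinarith [mul_self_nonneg p, mul_self_nonneg q, mul_self_nonneg r]
  apply cone_univ
  intro α β γ H
  have H' : ∀ σ : Equiv.Perm (Fin 4), 0 ≤ γ * Q3 a b c (σ 0) (σ 1) (σ 2) (σ 3) ∧
      (γ = 0 → 0 ≤ α * Q2 a b (σ 0) (σ 1) (σ 2) (σ 3) +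
        β * Q2 b c (σ 0) (σ 1) (σ 2) (σ 3)) := by
    intro σ
    obtain ⟨x, y, z, w, hx⟩ := entries B a' b' c' d e f h σ
    have hh := fun t : ℕ => H (tauR (Bprod B σ t)) ⟨σ, t, rfl⟩
    constructor
    · apply lead3 (α * x + β * y + γ * z) (α * Q2 a b (σ 0) (σ 1) (σ 2) (σ 3) +
        β * Q2 b c (σ 0) (σ 1) (σ 2) (σ 3) + γ * w)
      intro t
      have := hh t
      rw [(hx t).1, (hx t).2.1, (hx t).2.2] at this
      refine this.trans_eq ?_
      ring
    · intro hγ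
      apply lead2 (α * x + β * y)
      intro t
      have := hh t
      rw [(hx t).1, (hx t).2.1, (hx t).2.2, hγ] at this
      refine this.trans_eq ?_
      ring
  clear H
  have H3 : ∀ i j k l : Fin 4, Function.Injective ![i, j, k, l] → 0 ≤ γ * Q3 a b c i j k l := by
    intro i j k l hi
    obtain ⟨σ, rfl, rfl, rfl, rfl⟩ := perm_of i j k l hi
    exact (H' σ).1
  have H2 : γ = 0 → ∀ i j k l : Fin 4, Function.Injective ![i, j, k, l] →
      0 ≤ α * Q2 a b i j k l + β * Q2 b c i j k l := by
    intro hγ i j k l hi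
    obtain ⟨σ, rfl, rfl, rfl, rfl⟩ := perm_of i j k l hi
    exact (H' σ).2 hγ
  have ext2 : ∀ i j : Fin 4, i ≠ j → ∃ k l, Function.Injective ![i, j, k, l] := by decide
  have ext3 : ∀ i j k : Fin 4, i ≠ j → i ≠ k → j ≠ k →
    ∃ l, Function.Injective ![i, j, k, l] := by decide
  have hinj : ∀ i j k l : Fin 4, Function.Injective ![i, j, k, l] →
      Function.Injective ![j, i, k, l] ∧ Function.Injective ![k, i, j, l] ∧
      Function.Injective ![k, j, i, l] ∧ Function.Injective ![l, k, j, i] ∧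
      Function.Injective ![l, k, i, j] ∧ i ≠ j ∧ i ≠ k ∧ i ≠ l ∧ j ≠ k ∧ j ≠ l ∧ k ≠ l := by decide
  have hγ : γ = 0 := by
    by_contra hγ
    have hz : ∀ i j k l : Fin 4, Function.Injective ![i, j, k, l] → Q3 a b c i j k l = 0 := by
      have hs := congrArg (γ * ·) (Q3_sum a b c hsa hsb hsc)
      simp only [mul_add, mul_zero] at hs
      have hsg : γ * γ > 0 := mul_self_pos.2 hγ
      have h1 := H3 0 1 2 3 (by decide)
      have h2 := H3 0 1 3 2 (by decide)
      have h3 := H3 0 2 1 3 (by decide)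
      have h4 := H3 0 2 3 1 (by decide)
      have h5 := H3 0 3 1 2 (by decide)
      have h6 := H3 0 3 2 1 (by decide)
      have h7 := H3 1 0 2 3 (by decide)
      have h8 := H3 1 0 3 2 (by decide)
      have h9 := H3 1 2 0 3 (by decide)
      have h10 := H3 1 2 3 0 (by decide)
      have h11 := H3 1 3 0 2 (by decide)
      have h12 := H3 1 3 2 0 (by decide)
      have h13 := H3 2 0 1 3 (by decide)
      have h14 := H3 2 0 3 1 (by decide)
      have h15 := H3 2 1 0 3 (by decide)
      have h16 := H3 2 1 3 0 (by decide)
      have h17 := H3 2 3 0 1 (by decide)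
      have h18 := H3 2 3 1 0 (by decide)
      have h19 := H3 3 0 1 2 (by decide)
      have h20 := H3 3 0 2 1 (by decide)
      have h21 := H3 3 1 0 2 (by decide)
      have h22 := H3 3 1 2 0 (by decide)
      have h23 := H3 3 2 0 1 (by decide)
      have h24 := H3 3 2 1 0 (by decide)
      have enum : ∀ i j k l : Fin 4, Function.Injective ![i, j, k, l] →
          (i, j, k, l) ∈ ([(0,1,2,3),(0,1,3,2),(0,2,1,3),(0,2,3,1),(0,3,1,2),(0,3,2,1),
            (1,0,2,3),(1,0,3,2),(1,2,0,3),(1,2,3,0),(1,3,0,2),(1,3,2,0),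
            (2,0,1,3),(2,0,3,1),(2,1,0,3),(2,1,3,0),(2,3,0,1),(2,3,1,0),
            (3,0,1,2),(3,0,2,1),(3,1,0,2),(3,1,2,0),(3,2,0,1),(3,2,1,0)] :
              List (Fin 4 × Fin 4 × Fin 4 × Fin 4)) := by decide
      intro i j k l hi
      have hm := enum i j k l hi
      have : γ * Q3 a b c i j k l = 0 := by
        simp only [List.mem_cons, Prod.mk.injEq, List.not_mem_nil, or_false] at hm
        rcases hm with hm | hm | hm | hm | hm | hm | hm | hm | hm | hm | hm | hm | hm | hm |
          hm | hm | hm | hm | hm | hm | hm | hm | hm | hm <;>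
        · obtain ⟨rfl, rfl, rfl, rfl⟩ := hm
          linarith only [hs, h1, h2, h3, h4, h5, h6, h7, h8, h9, h10, h11, h12, h13, h14, h15,
            h16, h17, h18, h19, h20, h21, h22, h23, h24]
      exact (mul_eq_zero.1 this).resolve_left hγ
    have T1 : ∀ i j k : Fin 4, i ≠ j → i ≠ k → j ≠ k → TB a b c i j k = 0 := by
      intro i j k h1 h2 h3
      obtain ⟨l, hl⟩ := ext3 i j k h1 h2 h3
      obtain ⟨g1, g2, g3, _⟩ := hinj i j k l hl
      have e1 := hz _ _ _ _ hl
      have e2 := hz _ _ _ _ g1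
      have e3 := hz _ _ _ _ g2
      have e4 := hz _ _ _ _ g3
      simp only [Q3] at e1 e2 e3 e4
      simp only [TB]
      linear_combination e3 - e4 - e1 + e2
    have T2 : ∀ i j : Fin 4, TB a b c i j j = 0 := by
      intro i j
      by_cases hij : i = j
      · subst hij; simp only [TB]; ring
      obtain ⟨k, l, hkl⟩ := ext2 i j hij
      obtain ⟨_, _, _, _, _, n1, n2, n3, n4, n5, n6⟩ := hinj i j k l hkl
      obtain ⟨σ, h0, h1, h2, h3⟩ := perm_of i j k l hkl
      have S : ∀ g : Fin 4 → ℝ, g 0 + g 1 + g 2 + g 3 = 0 → g i + g j + g k + g l = 0 := by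
        intro g hg
        have := Equiv.sum_comp σ g
        rw [Fin.sum_univ_four, Fin.sum_univ_four, h0, h1, h2, h3, hg] at this
        exact this
      have sa := S a hsa
      have sb := S b hsb
      have sc := S c hsc
      have t1 := T1 i k j n2 n1 n4.symm
      have t2 := T1 i l j n3 n1 n5.symm
      simp only [TB] at t1 t2 ⊢
      linear_combination -t1 - t2 + (a j * b i) * sc - (a j * c i) * sb - (c j * a i) * sb
        + (c j * b i) * sa
    have T3 : ∀ i j k : Fin 4, TB a b c i j k = 0 := by
      intro i j k
      by_cases h1 : i = j
      · subst h1; simp only [TB]; ring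
      by_cases h2 : j = k
      · subst h2; exact T2 i j
      by_cases h3 : i = k
      · subst h3
        have := T2 j i
        simp only [TB] at this ⊢
        linear_combination -this
      exact T1 i j k h1 h3 h2
    have U1 : ∀ i j, b i * c j - b j * c i = 0 := fun i j =>
      (nondeg (b i * c j - b j * c i) 0 (-(a i * b j - a j * b i)) (fun k => by
        have := T3 i j k
        simp only [TB] at this
        linear_combination this)).1
    have U2 : ∀ i, b i = 0 := fun i =>
      (nondeg 0 (-c i) (b i) (fun j => by linear_combination U1 i j)).2.2
    have := (nondeg 0 1 0 (fun i => by rw [U2 i]; ring)).2.1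
    exact one_ne_zero this
  have Z2 : ∀ i j k l : Fin 4, Function.Injective ![i, j, k, l] →
      α * Q2 a b i j k l + β * Q2 b c i j k l = 0 := by
    intro i j k l hi
    obtain ⟨σ, h0, h1, h2, h3⟩ := perm_of i j k l hi
    have S : ∀ g : Fin 4 → ℝ, g 0 + g 1 + g 2 + g 3 = 0 → g i + g j + g k + g l = 0 := by
      intro g hg
      have := Equiv.sum_comp σ g
      rw [Fin.sum_univ_four, Fin.sum_univ_four, h0, h1, h2, h3, hg] at this
      exact this
    have sb := S b hsb
    have sa := S a hsa
    have p1 := H2 hγ i j k l hi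
    have p2 := H2 hγ l k j i (hinj i j k l hi).2.2.2.1
    have sc := S c hsc
    have : (α * Q2 a b i j k l + β * Q2 b c i j k l) +
        (α * Q2 a b l k j i + β * Q2 b c l k j i) = 0 := by
      simp only [Q2]
      linear_combination α * (a i + a j + a k + a l) * sb + β * (b i + b j + b k + b l) * sc
    linarith
  have V : ∀ i j, α * (a i * b j - a j * b i) + β * (b i * c j - b j * c i) = 0 := by
    intro i j
    by_cases hij : i = j
    · subst hij; ring
    obtain ⟨k, l, hkl⟩ := ext2 i j hij
    have e1 := Z2 _ _ _ _ hkl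
    have e2 := Z2 _ _ _ _ (hinj i j k l hkl).1
    simp only [Q2] at e1 e2
    linear_combination e1 - e2
  have W := fun i => nondeg (-(α * b i)) (α * a i - β * c i) (β * b i)
    (fun j => by linear_combination V i j)
  refine ⟨?_, ?_, hγ⟩
  · exact (nondeg 0 α 0 (fun i => by linear_combination -(W i).1)).2.1
  · exact (nondeg 0 β 0 (fun i => by linear_combination (W i).2.2)).2.1
end
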